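/- arXiv:1802.05124 — 2 statements merged into one kernel-verified Lean document; each statement's English description precedes it below -/
import Mathlib

section
/- Let A be a finite set of integers with |A| = n ≥ 1 that is complete in ℤ, and suppose the two-fold sumset 2A = {x + y : x, y ∈ A} satisfies |2A| = n(n+1)/2. If there exist distinct elements x, y ∈ A such that (n+1) divides x + y, then 2A is complete in ℤ. -/
open Pointwise

/-!
The map `s(x, y) ↦ x + y` sends the unordered pairs from `A` (diagonal included) onto `A + A`.
There are `n(n+1)/2` such pairs, so the cardinality hypothesis makes this map injective on them,
and sums and products over `A + A` may be computed over unordered pairs.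

Each element of `A` occurs `n + 1` times among these pairs, hence `∑ (A + A) = (n + 1) * ∑ A`
(`sum_pairSum_sym2`). The diagonal pairs contribute `∏ (2 * a) = 2 ^ n * ∏ A` to the product, which
is a multiple of `∑ A` since `A` is complete, and the separate pair `s(x, y)` with `x ≠ y`
contributes a multiple of `n + 1`. So the product is divisible by `(n + 1) * ∑ A`.
-/

/-- The sum of the two entries of an unordered pair of integers. -/
def pairSum : Sym2 ℤ → ℤ := Sym2.lift ⟨fun x y => x + y, fun x y => add_comm x y⟩

@[simp]
lemma pairSum_mk (x y : ℤ) : pairSum s(x, y) = x + y := rfl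

@[simp]
lemma pairSum_diag (x : ℤ) : pairSum (Sym2.diag x) = x + x := rfl

lemma image_pairSum_sym2 (A : Finset ℤ) : A.sym2.image pairSum = A + A := by
  ext z
  rw [Finset.mem_image, Finset.mem_add]
  constructor
  · rintro ⟨⟨x, y⟩, h, rfl⟩
    obtain ⟨hx, hy⟩ := Finset.mk_mem_sym2_iff.mp h
    exact ⟨x, hx, y, hy, rfl⟩
  · rintro ⟨x, hx, y, hy, rfl⟩
    exact ⟨s(x, y), Finset.mk_mem_sym2_iff.mpr ⟨hx, hy⟩, rfl⟩

lemma sum_pairSum_sym2 (A : Finset ℤ) :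
    ∑ s ∈ A.sym2, pairSum s = ((A.card : ℤ) + 1) * ∑ x ∈ A, x := by
  induction A using Finset.cons_induction with
  | empty => simp
  | cons a s ha ih =>
    rw [Finset.sym2_cons, Finset.sum_disjUnion, ih, Finset.sum_map, Finset.card_cons,
      Finset.sum_cons, Finset.sum_cons]
    simp only [Sym2.mkEmbedding_apply, pairSum_mk]
    rw [Finset.sum_add_distrib, Finset.sum_const, nsmul_eq_mul]
    push_cast
    ring

/-- If `A` is a complete finite set of integers with `|A| = n ≥ 1` whose two-fold
sumset `2A = A + A` has cardinality `n(n+1)/2`, and `n + 1` divides `x + y` for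
some distinct `x, y ∈ A`, then `2A` is complete in ℤ. -/
theorem sumset_complete (n : ℕ) (hn : 1 ≤ n) (A : Finset ℤ) (hcard : A.card = n)
    (hA : ∃ b : ℤ, ∏ x ∈ A, x = b * ∑ x ∈ A, x)
    (h2A : (A + A).card = n * (n + 1) / 2)
    (hdvd : ∃ x ∈ A, ∃ y ∈ A, x ≠ y ∧ ((n : ℤ) + 1) ∣ (x + y)) :
    ∃ R : ℤ, ∏ x ∈ A + A, x = R * ∑ x ∈ A + A, x := by
  obtain ⟨b, hb⟩ := hA
  obtain ⟨x, hx, y, hy, hxy, hd⟩ := hdvd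
  have hinj : Set.InjOn pairSum A.sym2 := by
    rw [← Finset.card_image_iff, image_pairSum_sym2, h2A, Finset.card_sym2, hcard,
      Nat.choose_two_right, Nat.add_sub_cancel, Nat.mul_comm]
  rw [← image_pairSum_sym2, Finset.prod_image hinj, Finset.sum_image hinj, sum_pairSum_sym2, hcard]
  -- It suffices to use the factors from the diagonal pairs and from the single pair `s(x, y)`.
  have hnot : s(x, y) ∉ A.image Sym2.diag := by
    intro h
    obtain ⟨a, -, ha⟩ := Finset.mem_image.mp h
    have h' : s(a, a) = s(x, y) := ha
    rw [Sym2.eq_iff] at h'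
    grind
  have hsub : insert s(x, y) (A.image Sym2.diag) ⊆ A.sym2 := by
    intro s hs
    rcases Finset.mem_insert.mp hs with rfl | hs
    · exact Finset.mk_mem_sym2_iff.mpr ⟨hx, hy⟩
    · obtain ⟨a, ha, rfl⟩ := Finset.mem_image.mp hs
      exact Finset.diag_mem_sym2_iff.mpr ha
  have hdiag : ∑ a ∈ A, a ∣ ∏ s ∈ A.image Sym2.diag, pairSum s := by
    rw [Finset.prod_image (Sym2.diag_injective.injOn)]
    simp only [pairSum_diag, ← two_mul]
    rw [Finset.prod_mul_distrib, hb, ← mul_assoc]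
    exact dvd_mul_left _ _
  have key : ((n : ℤ) + 1) * ∑ a ∈ A, a ∣ ∏ s ∈ A.sym2, pairSum s := by
    refine dvd_trans ?_ (Finset.prod_dvd_prod_of_subset _ _ pairSum hsub)
    rw [Finset.prod_insert hnot]
    exact mul_dvd_mul hd hdiag
  obtain ⟨R, hR⟩ := key
  exact ⟨R, by rw [hR, mul_comm]⟩
end

section
/- Let C(N) denote the number of subsets S of {1, 2, …, N} that are complete in ℤ. Then C(N) ≫ N log N; that is, there exist a real constant c > 0 and a natural number N_0 such that C(N) ≥ c · N · log N for all N ≥ N_0. -/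
/-!
For `0 < a < b`, the set `{a, b, a + b}` has sum `2 * (a + b)` and product `a * b * (a + b)`, so it is
complete as soon as `a` is even. With `M = ⌊N / 5⌋`, letting `a = 2 * i` and `b = 2 * M + j` for
`1 ≤ i, j ≤ M` gives `M ^ 2` distinct complete subsets of `{1, …, N}`, since `a ≤ 2 * M < b < a + b`
and `a + b ≤ 5 * M ≤ N`. Hence the count is quadratic in `N`, which is more than `N * log N`.
-/

open Classical in
/-- The number of subsets of `{1, 2, …, N}` that are complete in ℤ. -/
noncomputable def completeSetCount (N : ℕ) : ℕ :=
  ((Finset.Icc (1 : ℤ) N).powerset.filter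
    (fun S => ∃ b : ℤ, ∏ x ∈ S, x = b * ∑ x ∈ S, x)).card

/-- A quadratic lower bound, from the sets `{2i, 2M + j, 2i + 2M + j}` with `M = N / 5`. -/
theorem sq_le_completeSetCount (N : ℕ) : (N / 5) ^ 2 ≤ completeSetCount N := by
  classical
  set M : ℕ := N / 5 with hM
  have hMN : (5 : ℤ) * M ≤ N := by omega
  have hcard : (Finset.Icc (1 : ℤ) M ×ˢ Finset.Icc (1 : ℤ) M).card = M ^ 2 := by
    simp [Finset.card_product, sq]
  rw [← hcard]
  unfold completeSetCount
  apply Finset.card_le_card_of_injOn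
    (fun p : ℤ × ℤ => ({2 * p.1, 2 * M + p.2, 2 * p.1 + (2 * M + p.2)} : Finset ℤ))
  · rintro ⟨i, j⟩ h
    simp only [Finset.coe_product, Set.mem_prod, Finset.mem_coe, Finset.mem_Icc] at h
    obtain ⟨⟨hi1, hi2⟩, hj1, hj2⟩ := h
    simp only [Finset.coe_filter, Set.mem_ofPred_eq, Finset.mem_powerset]
    constructor
    · intro x hx
      simp only [Finset.mem_insert, Finset.mem_singleton] at hx
      rw [Finset.mem_Icc]
      omega
    · have h1 : 2 * i ∉ ({2 * M + j, 2 * i + (2 * M + j)} : Finset ℤ) := by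
        simp only [Finset.mem_insert, Finset.mem_singleton]
        omega
      have h2 : 2 * M + j ∉ ({2 * i + (2 * M + j)} : Finset ℤ) := by
        simp only [Finset.mem_singleton]
        omega
      refine ⟨i * (2 * M + j), ?_⟩
      rw [Finset.prod_insert h1, Finset.prod_insert h2, Finset.sum_insert h1,
        Finset.sum_insert h2, Finset.prod_singleton, Finset.sum_singleton]
      ring
  · rintro ⟨i, j⟩ h ⟨k, l⟩ h' heq
    simp only [Finset.coe_product, Set.mem_prod, Finset.mem_coe, Finset.mem_Icc] at h h'
    dsimp only at heq
    -- Each generator lies in the other set; comparing sizes then identifies them.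
    have e1 : 2 * i ∈ ({2 * k, 2 * M + l, 2 * k + (2 * M + l)} : Finset ℤ) := by
      rw [← heq]; simp
    have e2 : 2 * M + j ∈ ({2 * k, 2 * M + l, 2 * k + (2 * M + l)} : Finset ℤ) := by
      rw [← heq]; simp
    have e3 : 2 * M + l ∈ ({2 * i, 2 * M + j, 2 * i + (2 * M + j)} : Finset ℤ) := by
      rw [heq]; simp
    simp only [Finset.mem_insert, Finset.mem_singleton] at e1 e2 e3
    rw [Prod.mk.injEq]
    omega

/-- The number of complete subsets of `{1, …, N}` is `≫ N log N`. -/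
theorem completeSetCount_lower_bound :
    ∃ c : ℝ, 0 < c ∧ ∃ N₀ : ℕ, ∀ N : ℕ, N₀ ≤ N →
      c * N * Real.log N ≤ (completeSetCount N : ℝ) := by
  refine ⟨1 / 100, by norm_num, 5, fun N hN => ?_⟩
  have h1 : ((N / 5 : ℕ) : ℝ) ^ 2 ≤ completeSetCount N := by
    exact_mod_cast sq_le_completeSetCount N
  have h2 : (N : ℝ) ≤ 10 * ((N / 5 : ℕ) : ℝ) := by
    have : N ≤ 10 * (N / 5) := by omega
    exact_mod_cast this
  have h0 : (0 : ℝ) ≤ N := Nat.cast_nonneg N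
  have h3 : Real.log N ≤ N := Real.log_le_self h0
  calc 1 / 100 * (N : ℝ) * Real.log N ≤ 1 / 100 * N * N := by gcongr
    _ ≤ ((N / 5 : ℕ) : ℝ) ^ 2 := by nlinarith
    _ ≤ completeSetCount N := h1
end
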